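/- arXiv:1501.06683 — 3 statements merged into one kernel-verified Lean document; each statement's English description precedes it below -/
import Mathlib

section
/- Let $C$ be an $[n,k,d]$ linear code over a field $F$ with all-symbol $(r,\delta)$-locality, i.e., for every coordinate $i$ there is a punctured code $C_i$ of $C$ with $i$ in its support, $\dim(C_i) \leq r$, and $d_{\min}(C_i) \geq \delta$. Then $d \leq n - k + 1 - (\lceil k/r \rceil - 1)(\delta - 1)$. -/
open Finset

variable (F : Type*) [Field F] [DecidableEq F] (n : ℕ)

/-- The linear map restricting a word of length `n` to the coordinates in `S`
(setting the remaining coordinates to zero). -/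
def puncProj (S : Finset (Fin n)) : (Fin n → F) →ₗ[F] (Fin n → F) where
  toFun c := fun j => if j ∈ S then c j else 0
  map_add' x y := by funext j; by_cases h : j ∈ S <;> simp [h]
  map_smul' a x := by funext j; by_cases h : j ∈ S <;> simp [h]

/-- The punctured code of `C` obtained by restricting to the coordinate set `S`. -/
def puncture (C : Submodule F (Fin n → F)) (S : Finset (Fin n)) :
    Submodule F (Fin n → F) :=
  C.map (puncProj F n S)

/-- `C` has all-symbol `(r,δ)`-locality: every coordinate in the support of `C`
lies in the support of a punctured code of dimension at most `r` and minimum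
distance at least `δ`. -/
def HasLocality (C : Submodule F (Fin n → F)) (r δ : ℕ) : Prop :=
  ∀ i : Fin n, (∃ c ∈ C, c i ≠ 0) →
    ∃ S : Finset (Fin n),
      (∃ c ∈ puncture F n C S, c i ≠ 0) ∧
      Module.finrank F ↥(puncture F n C S) ≤ r ∧
      ∀ c ∈ puncture F n C S, c ≠ 0 → δ ≤ hammingNorm c

/-- `d` is the minimum Hamming distance of the linear code `C`. -/
def IsMinDist (C : Submodule F (Fin n → F)) (d : ℕ) : Prop :=
  (∃ c ∈ C, c ≠ 0 ∧ hammingNorm c = d) ∧ ∀ c ∈ C, c ≠ 0 → d ≤ hammingNorm c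

theorem puncProj_apply_aux (S : Finset (Fin n)) (c : Fin n → F) (j : Fin n) :
    puncProj F n S c j = if j ∈ S then c j else 0 := rfl

theorem exists_ne_zero_vanish_aux (D : Submodule F (Fin n → F)) (B : Finset (Fin n))
    (hB : B.card < Module.finrank F D) : ∃ x ∈ D, x ≠ 0 ∧ ∀ j ∈ B, x j = 0 := by
  let f : D →ₗ[F] (B → F) :=
    (LinearMap.funLeft F F (fun b : B => (b : Fin n))).comp D.subtype
  have hf : LinearMap.ker f ≠ ⊥ := by
    apply LinearMap.ker_ne_bot_of_finrank_lt
    simpa using hB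
  obtain ⟨x, hx, hx0⟩ := Submodule.exists_mem_ne_zero_of_ne_bot hf
  refine ⟨x, x.2, by simpa using hx0, fun j hj => ?_⟩
  have := congrFun (LinearMap.mem_ker.1 hx) ⟨j, hj⟩
  simpa [f, LinearMap.funLeft_apply] using this

theorem singleton_aux (D : Submodule F (Fin n → F)) (A : Finset (Fin n)) (δ : ℕ)
    (hD : 0 < Module.finrank F D) (hA : ∀ x ∈ D, ∀ j, j ∉ A → x j = 0)
    (hδ : ∀ x ∈ D, x ≠ 0 → δ ≤ hammingNorm x) :
    Module.finrank F D + δ ≤ A.card + 1 := by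
  have h1 : Module.finrank F D ≤ A.card := by
    by_contra! h
    obtain ⟨x, hx, hx0, hxA⟩ := exists_ne_zero_vanish_aux F n D A h
    apply hx0
    funext j
    by_cases hj : j ∈ A
    · exact hxA j hj
    · exact hA x hx j hj
  obtain ⟨B, hBA, hB⟩ := Finset.exists_subset_card_eq
    (show Module.finrank F D - 1 ≤ A.card by omega)
  obtain ⟨x, hx, hx0, hxB⟩ := exists_ne_zero_vanish_aux F n D B (by omega)
  have h2 := hδ x hx hx0
  have h3 : hammingNorm x ≤ (A \ B).card := by
    unfold hammingNorm
    apply Finset.card_le_card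
    intro j hj
    simp only [Finset.mem_filter, Finset.mem_univ, true_and] at hj
    rw [Finset.mem_sdiff]
    exact ⟨by_contra fun h => hj (hA x hx j h), fun h => hj (hxB j h)⟩
  rw [Finset.card_sdiff_of_subset hBA] at h3
  omega

theorem mem_ker_puncProj_aux (S : Finset (Fin n)) (c : Fin n → F) :
    c ∈ LinearMap.ker (puncProj F n S) ↔ ∀ j ∈ S, c j = 0 := by
  rw [LinearMap.mem_ker, funext_iff]
  simp [puncProj_apply_aux]

theorem chain_aux (k r δ : ℕ) (C : Submodule F (Fin n → F))
    (hk : Module.finrank F C = k) (hloc : HasLocality F n C r δ) (m : ℕ) (hm : m * r < k) :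
    ∃ T : Finset (Fin n),
      k ≤ Module.finrank F ↥(C ⊓ LinearMap.ker (puncProj F n T)) + m * r ∧
      (k : ℤ) + m * ((δ : ℤ) - 1) ≤
        T.card + Module.finrank F ↥(C ⊓ LinearMap.ker (puncProj F n T)) := by
  induction m with
  | zero =>
    have h : C ⊓ LinearMap.ker (puncProj F n ∅) = C := by
      apply inf_eq_left.2
      intro c _
      rw [mem_ker_puncProj_aux]
      simp
    exact ⟨∅, by rw [h]; omega, by rw [h]; simp [hk]⟩
  | succ m ih =>
    rw [add_mul, one_mul] at hm
    obtain ⟨T, h1, h2⟩ := ih (by omega)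
    set K := C ⊓ LinearMap.ker (puncProj F n T) with hK
    have hKne : K ≠ ⊥ := by
      intro h
      rw [h, finrank_bot] at h1
      omega
    obtain ⟨c, hc, hc0⟩ := Submodule.exists_mem_ne_zero_of_ne_bot hKne
    obtain ⟨i, hi⟩ := Function.ne_iff.1 hc0
    have hi : c i ≠ 0 := hi
    obtain ⟨S, ⟨c', hc', hci'⟩, hSr, hSδ⟩ := hloc i ⟨c, hc.1, hi⟩
    have hiS : i ∈ S := by
      obtain ⟨c'', _, rfl⟩ := hc'
      by_contra h
      exact hci' (by simp [puncProj_apply_aux, h])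
    have hle : K.map (puncProj F n S) ≤ puncture F n C S := Submodule.map_mono inf_le_left
    have hK' : C ⊓ LinearMap.ker (puncProj F n (T ∪ S)) = K ⊓ LinearMap.ker (puncProj F n S) := by
      ext x
      simp only [hK, Submodule.mem_inf, mem_ker_puncProj_aux, Finset.mem_union, or_imp, forall_and,
        and_assoc]
    have hdim : Module.finrank F ↥(K.map (puncProj F n S)) +
        Module.finrank F ↥(K ⊓ LinearMap.ker (puncProj F n S)) = Module.finrank F K := by
      have := LinearMap.finrank_range_add_finrank_ker ((puncProj F n S).domRestrict K)
      rw [LinearMap.range_domRestrict, LinearMap.ker_domRestrict] at this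
      rw [← this]
      congr 1
      rw [← Submodule.map_comap_subtype]
      exact Submodule.finrank_map_subtype_eq K _
    have hr' := (Submodule.finrank_mono hle).trans hSr
    have hpos : 0 < Module.finrank F ↥(K.map (puncProj F n S)) := by
      rw [Module.finrank_pos_iff, Submodule.nontrivial_iff_ne_bot]
      intro h
      have h0 : puncProj F n S c ∈ K.map (puncProj F n S) := Submodule.mem_map_of_mem hc
      rw [h, Submodule.mem_bot] at h0
      have := congrFun h0 i
      simp [puncProj_apply_aux, hiS, hi] at this
    have hs := singleton_aux F n (K.map (puncProj F n S)) (S \ T) δ hpos (by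
      rintro _ ⟨x, hx, rfl⟩ j hj
      have hxT := (mem_ker_puncProj_aux F n T x).1 hx.2
      rw [puncProj_apply_aux]
      split_ifs with hjS
      · apply hxT
        by_contra hjT
        exact hj (Finset.mem_sdiff.2 ⟨hjS, hjT⟩)
      · rfl) (fun x hx => hSδ x (hle hx))
    have hcard : (T ∪ S).card = T.card + (S \ T).card := by
      rw [← Finset.union_sdiff_self_eq_union, Finset.card_union_of_disjoint Finset.disjoint_sdiff]
    refine ⟨T ∪ S, ?_, ?_⟩
    · rw [hK', add_mul, one_mul]
      omega
    · rw [hK', hcard]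
      push_cast
      rw [add_mul, one_mul]
      zify at hs hdim
      linarith

/-- Generalized Singleton bound for codes with `(r,δ)`-locality. -/
theorem minDist_le_of_locality (k d r δ : ℕ) (C : Submodule F (Fin n → F))
    (hk : Module.finrank F C = k) (hkpos : 0 < k) (hr : 0 < r)
    (hd : IsMinDist F n C d) (hloc : HasLocality F n C r δ) :
    (d : ℤ) ≤ (n : ℤ) - k + 1 - (⌈(k : ℚ) / r⌉ - 1) * ((δ : ℤ) - 1) := by
  obtain ⟨m, hm, hceil⟩ : ∃ m : ℕ, m * r < k ∧ ⌈(k : ℚ) / r⌉ = (m : ℤ) + 1 := by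
    refine ⟨(k - 1) / r, ?_, ?_⟩
    · have := Nat.div_mul_le_self (k - 1) r
      omega
    · have hr' : (0 : ℚ) < r := by exact_mod_cast hr
      have h1 := Nat.div_mul_le_self (k - 1) r
      have h2 := Nat.lt_div_mul_add (a := k - 1) hr
      rw [Int.ceil_eq_iff]
      push_cast
      constructor
      · rw [lt_div_iff₀ hr', add_sub_cancel_right]
        have : (k - 1) / r * r < k := by omega
        exact_mod_cast this
      · rw [div_le_iff₀ hr', add_mul, one_mul]
        have : k ≤ (k - 1) / r * r + r := by omega
        exact_mod_cast this
  obtain ⟨T, h1, h2⟩ := chain_aux F n k r δ C hk hloc m hm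
  have hs := singleton_aux F n (C ⊓ LinearMap.ker (puncProj F n T)) Tᶜ d (by omega)
    (fun x hx j hj => (mem_ker_puncProj_aux F n T x).1 hx.2 j (by simpa using hj))
    (fun x hx => hd.2 x hx.1)
  have hc := Finset.card_add_card_compl T
  rw [Fintype.card_fin] at hc
  rw [hceil, add_sub_cancel_right]
  zify at hs hc
  linarith
end

section
/- Let $C$ be an $[n,k,d]$ linear code with two-level hierarchical locality with parameters $[(r_1,\delta_1),(r_2,\delta_2)]$: for every coordinate $i$ there is a punctured code $C_i$ containing $i$ in its support with $\dim(C_i) \leq r_1$, $d_{\min}(C_i) \geq \delta_1$, and $C_i$ itself has $(r_2,\delta_2)$-locality. Then $d \leq n - k + 1 - (\lceil k/r_2 \rceil - 1)(\delta_2 - 1) - (\lceil k/r_1 \rceil - 1)(\delta_1 - \delta_2)$. -/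
open Finset

variable (F : Type*) [Field F] [DecidableEq F] (n : ℕ)

/-- `C` has two-level hierarchical locality with parameters `[(r₁,δ₁),(r₂,δ₂)]`. -/
def HasHierLocality2 (C : Submodule F (Fin n → F)) (r₁ δ₁ r₂ δ₂ : ℕ) : Prop :=
  ∀ i : Fin n, (∃ c ∈ C, c i ≠ 0) →
    ∃ S : Finset (Fin n),
      (∃ c ∈ puncture F n C S, c i ≠ 0) ∧
      Module.finrank F ↥(puncture F n C S) ≤ r₁ ∧
      (∀ c ∈ puncture F n C S, c ≠ 0 → δ₁ ≤ hammingNorm c) ∧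
      HasLocality F n (puncture F n C S) r₂ δ₂

/-- Codewords of `C` vanishing on `T`. -/
def vanSub (C : Submodule F (Fin n → F)) (T : Finset (Fin n)) : Submodule F (Fin n → F) :=
  C ⊓ LinearMap.ker (puncProj F n T)

lemma mem_vanSub (C : Submodule F (Fin n → F)) (T : Finset (Fin n)) (c : Fin n → F) :
    c ∈ vanSub F n C T ↔ c ∈ C ∧ ∀ j ∈ T, c j = 0 := by
  simp only [vanSub, Submodule.mem_inf, LinearMap.mem_ker, puncProj, LinearMap.coe_mk,
    AddHom.coe_mk, funext_iff]
  simp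

lemma finrank_le_ker_map {V : Type*} [AddCommGroup V] [Module F V]
    (W : Submodule F (Fin n → F)) (f : (Fin n → F) →ₗ[F] V) :
    Module.finrank F W ≤ Module.finrank F ↥(W ⊓ LinearMap.ker f) + Module.finrank F ↥(W.map f) := by
  have h := LinearMap.finrank_range_add_finrank_ker (f.domRestrict W)
  have h1 : LinearMap.range (f.domRestrict W) = W.map f := by
    ext x; simp [LinearMap.domRestrict_apply]
  have h2 : (LinearMap.ker (f.domRestrict W)).map W.subtype = W ⊓ LinearMap.ker f := by
    ext x; simp [LinearMap.domRestrict_apply, and_comm]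
  have h3 := LinearEquiv.finrank_eq (Submodule.equivMapOfInjective W.subtype
    (Submodule.injective_subtype W) (LinearMap.ker (f.domRestrict W)))
  rw [h2] at h3
  rw [h1] at h
  omega

lemma vanSub_union_rank (C : Submodule F (Fin n → F)) (T S : Finset (Fin n)) :
    Module.finrank F (vanSub F n C T) ≤
      Module.finrank F (vanSub F n C (T ∪ S)) + Module.finrank F (puncture F n C S) := by
  have h := finrank_le_ker_map F n (vanSub F n C T) (puncProj F n S)
  have h1 : vanSub F n C T ⊓ LinearMap.ker (puncProj F n S) ≤ vanSub F n C (T ∪ S) := by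
    intro c hc
    have h2 : c ∈ vanSub F n C S := ⟨hc.1.1, hc.2⟩
    have h3 := (mem_vanSub F n C T c).1 hc.1
    try rw [mem_vanSub] at h2
    rw [mem_vanSub]
    refine ⟨h3.1, fun j hj => ?_⟩
    rcases Finset.mem_union.1 hj with hj | hj
    · exact h3.2 j hj
    · exact h2.2 j hj
  have h2 : (vanSub F n C T).map (puncProj F n S) ≤ puncture F n C S :=
    Submodule.map_mono inf_le_left
  have := Submodule.finrank_mono h1
  have := Submodule.finrank_mono h2
  omega

lemma vanSub_union_card (C : Submodule F (Fin n → F)) (T S : Finset (Fin n)) :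
    Module.finrank F (vanSub F n C T) ≤
      Module.finrank F (vanSub F n C (T ∪ S)) + S.card := by
  have h := finrank_le_ker_map F n (vanSub F n C T)
    (LinearMap.funLeft F F (Subtype.val : S → Fin n))
  have h1 : vanSub F n C T ⊓ LinearMap.ker (LinearMap.funLeft F F (Subtype.val : S → Fin n))
      ≤ vanSub F n C (T ∪ S) := by
    intro c hc
    have h2 := hc.2
    have h3 := (mem_vanSub F n C T c).1 hc.1
    try rw [mem_vanSub] at h2
    rw [mem_vanSub]
    refine ⟨h3.1, fun j hj => ?_⟩
    rcases Finset.mem_union.1 hj with hj | hj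
    · exact h3.2 j hj
    · exact congrFun h2 ⟨j, hj⟩
  have := Submodule.finrank_mono h1
  have h4 := Submodule.finrank_le ((vanSub F n C T).map
    (LinearMap.funLeft F F (Subtype.val : S → Fin n)))
  simp only [Module.finrank_fintype_fun_eq_card, Fintype.card_coe] at h4
  omega

/-- Adding a set with minimum distance `δ` raises the nullity by `δ - 1`. -/
lemma add_local (C : Submodule F (Fin n → F)) (T S : Finset (Fin n)) (δ : ℕ)
    (hδ : ∀ c ∈ puncture F n C S, c ≠ 0 → δ ≤ hammingNorm c)
    (h : ∃ c ∈ vanSub F n C T, ∃ i ∈ S, c i ≠ 0) :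
    T.card + Module.finrank F (vanSub F n C T) + (δ - 1) ≤
      (T ∪ S).card + Module.finrank F (vanSub F n C (T ∪ S)) := by
  obtain ⟨c, hc, i, hi, hci⟩ := h
  rw [mem_vanSub] at hc
  have key : ∀ c ∈ C, ∀ A : Finset (Fin n), (∀ j ∈ S, c j ≠ 0 → j ∈ A) →
      (∃ i ∈ S, c i ≠ 0) → δ ≤ A.card := by
    rintro c hc A hA ⟨i, hi, hci⟩
    refine (hδ (puncProj F n S c) (Submodule.mem_map_of_mem hc) ?_).trans ?_
    · intro h0
      have := congrFun h0 i
      simp [puncProj, hi, hci] at this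
    · unfold hammingNorm
      apply Finset.card_le_card
      intro j hj
      simp [puncProj] at hj
      exact hA j hj.1 hj.2
  have h1 : δ ≤ (S \ T).card := by
    refine key c hc.1 _ (fun j hj hcj => ?_) ⟨i, hi, hci⟩
    rw [Finset.mem_sdiff]
    exact ⟨hj, fun hT => hcj (hc.2 j hT)⟩
  have hpos : 0 < (S \ T).card := by
    apply Finset.card_pos.2
    exact ⟨i, Finset.mem_sdiff.2 ⟨hi, fun hT => hci (hc.2 i hT)⟩⟩
  obtain ⟨D, hDs, hDc⟩ := Finset.exists_subset_card_eq (show δ - 1 ≤ (S \ T).card by omega)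
  have h2 := vanSub_union_card F n C T ((S \ T) \ D)
  rw [Finset.card_sdiff_of_subset hDs] at h2
  have h3 : vanSub F n C (T ∪ ((S \ T) \ D)) ≤ vanSub F n C (T ∪ S) := by
    intro x hx
    rw [mem_vanSub] at *
    refine ⟨hx.1, fun j hj => ?_⟩
    by_contra hne
    have hjS : j ∈ S := by
      rcases Finset.mem_union.1 hj with hj | hj
      · exact absurd (hx.2 j (Finset.mem_union_left _ hj)) hne
      · exact hj
    have hDcard : δ ≤ D.card := by
      refine key x hx.1 D (fun l hl hxl => ?_) ⟨j, hjS, hne⟩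
      by_contra hlD
      apply hxl
      apply hx.2
      simp only [Finset.mem_union, Finset.mem_sdiff]
      tauto
    have hjD : j ∈ D := by
      by_contra hlD
      apply hne
      apply hx.2
      simp only [Finset.mem_union, Finset.mem_sdiff]
      tauto
    have := Finset.card_pos.2 ⟨j, hjD⟩
    omega
  have h4 := Submodule.finrank_mono h3
  have h5 : (T ∪ S).card = T.card + (S \ T).card := by
    rw [← Finset.card_union_of_disjoint Finset.disjoint_sdiff, Finset.union_sdiff_self_eq_union]
  omega

lemma puncture_puncture (C : Submodule F (Fin n → F)) (S S' : Finset (Fin n)) :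
    puncture F n (puncture F n C S) S' = puncture F n C (S ∩ S') := by
  unfold puncture
  rw [← Submodule.map_comp]
  congr 1
  ext x j
  simp [puncProj]
  aesop

lemma mem_of_puncture (C : Submodule F (Fin n → F)) (S : Finset (Fin n)) (i : Fin n)
    (h : ∃ c ∈ puncture F n C S, c i ≠ 0) : i ∈ S := by
  obtain ⟨c, ⟨x, -, rfl⟩, hc⟩ := h
  by_contra hi
  simp [puncProj, hi] at hc

/-- Strict decrease of the vanishing subcode. -/
lemma vanSub_lt (C : Submodule F (Fin n → F)) (T S : Finset (Fin n))
    (h : ∃ c ∈ vanSub F n C T, ∃ i ∈ S, c i ≠ 0) :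
    Module.finrank F (vanSub F n C (T ∪ S)) < Module.finrank F (vanSub F n C T) := by
  obtain ⟨c, hc, i, hi, hci⟩ := h
  apply Submodule.finrank_lt_finrank_of_lt
  refine lt_of_le_of_ne ?_ ?_
  · intro x hx
    rw [mem_vanSub] at *
    exact ⟨hx.1, fun j hj => hx.2 j (Finset.mem_union_left _ hj)⟩
  · intro he
    rw [← he, mem_vanSub] at hc
    exact hci (hc.2 i (Finset.mem_union_right _ hi))

lemma inner_step (C : Submodule F (Fin n → F)) (S : Finset (Fin n)) (r δ : ℕ)
    (hloc : HasLocality F n (puncture F n C S) r δ) (N : ℕ) :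
    ∀ T : Finset (Fin n), Module.finrank F (vanSub F n C T) ≤ N →
    (∃ c ∈ vanSub F n C T, ∃ i ∈ S, c i ≠ 0) →
    ∃ (m : ℕ) (T' : Finset (Fin n)), T' ∪ S = T ∪ S ∧
      (∃ c ∈ vanSub F n C T', ∃ i ∈ S, c i ≠ 0) ∧
      T.card + Module.finrank F (vanSub F n C T) + m * (δ - 1) ≤
        T'.card + Module.finrank F (vanSub F n C T') ∧
      Module.finrank F (vanSub F n C T) ≤
        Module.finrank F (vanSub F n C (T ∪ S)) + (m + 1) * r := by
  induction N with
  | zero =>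
    intro T hT h
    have := vanSub_lt F n C T S h
    omega
  | succ N ih =>
    intro T hT h
    obtain ⟨c, hc, i, hi, hci⟩ := h
    have hc' := (mem_vanSub F n C T c).1 hc
    obtain ⟨S', h1, h2, h3⟩ := hloc i ⟨puncProj F n S c, Submodule.mem_map_of_mem hc'.1, by
      simp [puncProj, hi, hci]⟩
    rw [puncture_puncture] at h1 h2 h3
    have hiS := mem_of_puncture F n C _ i h1
    have hsub : S ∩ S' ∪ S = S := by simp
    have hne : ∃ c ∈ vanSub F n C T, ∃ i ∈ S ∩ S', c i ≠ 0 := ⟨c, hc, i, hiS, hci⟩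
    have hlt := vanSub_lt F n C T _ hne
    have hadd := add_local F n C T _ δ h3 hne
    have hrk := vanSub_union_rank F n C T (S ∩ S')
    by_cases hcase : ∃ c ∈ vanSub F n C (T ∪ S ∩ S'), ∃ i ∈ S, c i ≠ 0
    · obtain ⟨m, T', g1, g2, g3, g4⟩ := ih (T ∪ S ∩ S') (by omega) hcase
      have hU : T ∪ S ∩ S' ∪ S = T ∪ S := by rw [Finset.union_assoc, hsub]
      rw [hU] at g1 g4
      refine ⟨m + 1, T', g1, g2, ?_, ?_⟩
      · rw [Nat.add_mul]; omega
      · rw [Nat.add_mul (m + 1)]; omega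
    · refine ⟨0, T, rfl, ⟨c, hc, i, hi, hci⟩, by omega, ?_⟩
      have hle : vanSub F n C (T ∪ S ∩ S') ≤ vanSub F n C (T ∪ S) := by
        intro x hx
        have hx' := (mem_vanSub F n C _ x).1 hx
        rw [mem_vanSub]
        refine ⟨hx'.1, fun j hj => ?_⟩
        rcases Finset.mem_union.1 hj with hj | hj
        · exact hx'.2 j (Finset.mem_union_left _ hj)
        · by_contra hne'
          exact hcase ⟨x, hx, j, hj, hne'⟩
      have := Submodule.finrank_mono hle
      omega

lemma exists_coord (C : Submodule F (Fin n → F)) (T : Finset (Fin n))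
    (h : 0 < Module.finrank F (vanSub F n C T)) :
    ∃ c ∈ vanSub F n C T, ∃ i, c i ≠ 0 := by
  have hne : vanSub F n C T ≠ ⊥ := by
    intro h0
    rw [h0] at h
    simp at h
  obtain ⟨c, hc, hc0⟩ := Submodule.exists_mem_ne_zero_of_ne_bot hne
  exact ⟨c, hc, Function.ne_iff.1 hc0⟩

lemma outer_step (C : Submodule F (Fin n → F)) (r₁ δ₁ r₂ δ₂ : ℕ)
    (hδ₂ : 2 ≤ δ₂) (hδ : δ₂ ≤ δ₁)
    (hloc : HasHierLocality2 F n C r₁ δ₁ r₂ δ₂) (N : ℕ) :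
    ∀ T : Finset (Fin n), Module.finrank F (vanSub F n C T) ≤ N →
    0 < Module.finrank F (vanSub F n C T) →
    ∃ (a b : ℕ) (T' : Finset (Fin n)), 0 < Module.finrank F (vanSub F n C T') ∧
      T.card + Module.finrank F (vanSub F n C T) + a * (δ₂ - 1) + b * (δ₁ - δ₂) ≤
        T'.card + Module.finrank F (vanSub F n C T') ∧
      Module.finrank F (vanSub F n C T) ≤ (a + 1) * r₂ ∧
      Module.finrank F (vanSub F n C T) ≤ (b + 1) * r₁ := by
  induction N with
  | zero => intro T h1 h2; omega
  | succ N ih =>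
    intro T hT hpos
    obtain ⟨c, hc, i, hci⟩ := exists_coord F n C T hpos
    obtain ⟨S, h1, h2, h3, h4⟩ := hloc i ⟨c, ((mem_vanSub F n C T c).1 hc).1, hci⟩
    have hiS := mem_of_puncture F n C _ i h1
    have hne : ∃ c ∈ vanSub F n C T, ∃ i ∈ S, c i ≠ 0 := ⟨c, hc, i, hiS, hci⟩
    obtain ⟨m, T', g1, g2, g3, g4⟩ := inner_step F n C S r₂ δ₂ h4 _ T le_rfl hne
    have hlt := vanSub_lt F n C T _ hne
    have hlt' := vanSub_lt F n C T' _ g2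
    have hadd := add_local F n C T' _ δ₁ h3 g2
    have hrk := vanSub_union_rank F n C T S
    rw [g1] at hadd
    by_cases hz : Module.finrank F (vanSub F n C (T ∪ S)) = 0
    · exact ⟨m, 0, T', by omega, by omega, by omega, by omega⟩
    · obtain ⟨a, b, T'', k1, k2, k3, k4⟩ := ih (T ∪ S) (by omega) (by omega)
      refine ⟨a + (m + 1), b + 1, T'', k1, ?_, ?_, ?_⟩
      · rw [Nat.add_mul, Nat.add_mul m, Nat.add_mul b]; omega
      · rw [show a + (m + 1) + 1 = (a + 1) + (m + 1) by omega, Nat.add_mul (a + 1)]; omega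
      · rw [Nat.add_mul (b + 1)]; omega

lemma final_step (C : Submodule F (Fin n → F)) (d : ℕ)
    (hd : ∀ c ∈ C, c ≠ 0 → d ≤ hammingNorm c) (N : ℕ) :
    ∀ T : Finset (Fin n), Module.finrank F (vanSub F n C T) ≤ N →
    0 < Module.finrank F (vanSub F n C T) →
    d + T.card + Module.finrank F (vanSub F n C T) ≤ n + 1 := by
  induction N with
  | zero => intro T h1 h2; omega
  | succ N ih =>
    intro T hT hpos
    obtain ⟨c, hc, i, hci⟩ := exists_coord F n C T hpos
    have hc' := (mem_vanSub F n C T c).1 hc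
    have hiT : i ∉ T := fun h => hci (hc'.2 i h)
    have hlt := vanSub_lt F n C T {i} ⟨c, hc, i, by simp, hci⟩
    have hcard := vanSub_union_card F n C T {i}
    have hTi : (T ∪ {i}).card = T.card + 1 := by
      rw [Finset.card_union_of_disjoint (by simpa using hiT)]; simp
    rw [Finset.card_singleton] at hcard
    by_cases hz : Module.finrank F (vanSub F n C (T ∪ {i})) = 0
    · have hw := hd c hc'.1 (fun h => hci (by rw [h]; rfl))
      have hw2 : hammingNorm c ≤ Tᶜ.card := by
        unfold hammingNorm
        apply Finset.card_le_card
        intro j hj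
        rw [Finset.mem_compl]
        intro hjT
        exact (Finset.mem_filter.1 hj).2 (hc'.2 j hjT)
      have hw3 := Finset.card_add_card_compl T
      rw [Fintype.card_fin] at hw3
      omega
    · have := ih (T ∪ {i}) (by omega) (by omega)
      omega

/-- Upper bound on the minimum distance of codes with two-level hierarchical
locality (Theorem 1). -/
theorem minDist_le_of_hierLocality2 (k d r₁ δ₁ r₂ δ₂ : ℕ)
    (C : Submodule F (Fin n → F))
    (hk : Module.finrank F C = k) (hkpos : 0 < k)
    (hr₂ : 0 < r₂) (hr : r₂ ≤ r₁) (hrk : r₁ ≤ k)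
    (hδ₂ : 2 ≤ δ₂) (hδ : δ₂ ≤ δ₁)
    (hd : IsMinDist F n C d) (hloc : HasHierLocality2 F n C r₁ δ₁ r₂ δ₂) :
    (d : ℤ) ≤ (n : ℤ) - k + 1 - (⌈(k : ℚ) / r₂⌉ - 1) * ((δ₂ : ℤ) - 1)
      - (⌈(k : ℚ) / r₁⌉ - 1) * ((δ₁ : ℤ) - (δ₂ : ℤ)) := by
  obtain ⟨-, hd⟩ := hd
  have h0 : vanSub F n C ∅ = C := by
    ext x; simp [mem_vanSub]
  obtain ⟨a, b, T, h1, h2, h3, h4⟩ := outer_step F n C r₁ δ₁ r₂ δ₂ hδ₂ hδ hloc _ ∅ le_rfl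
    (by rw [h0]; omega)
  rw [h0, hk] at h2 h3 h4
  have h5 := final_step F n C d hd _ T le_rfl h1
  have hc : ∀ r a : ℕ, 0 < r → k ≤ (a + 1) * r → ⌈(k : ℚ) / r⌉ - 1 ≤ (a : ℤ) := by
    intro r a hr h
    have : ⌈(k : ℚ) / r⌉ ≤ (a : ℤ) + 1 := by
      rw [Int.ceil_le, div_le_iff₀ (by exact_mod_cast hr)]
      exact_mod_cast h
    linarith
  have ha := hc r₂ a hr₂ h3
  have hb := hc r₁ b (by omega) h4
  have ha' := mul_le_mul_of_nonneg_right ha (show (0 : ℤ) ≤ (δ₂ : ℤ) - 1 by omega)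
  have hb' := mul_le_mul_of_nonneg_right hb (show (0 : ℤ) ≤ (δ₁ : ℤ) - δ₂ by omega)
  have h6 : d + k + a * (δ₂ - 1) + b * (δ₁ - δ₂) ≤ n + 1 := by
    simp only [Finset.card_empty] at h2
    omega
  zify [hδ, (by omega : 1 ≤ δ₂)] at h6
  linarith
end

section
/- Let $C$ be a linear code of length $n$ and dimension $k$ over a field $F$ with generator matrix $G$. If $C_s$ is a punctured code of $C$ of dimension $k - 1$, then $d_{\min}(C) \leq n - |\mathrm{Supp}(C_s)|$, where $\mathrm{Supp}(C_s)$ is the set of coordinates on which $C_s$ is supported. -/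
open Finset

variable (F : Type*) [Field F] [DecidableEq F] (n : ℕ)

/-- If a punctured code of `C` has dimension `k - 1`, then the minimum distance
of `C` is at most `n` minus the size of the support of the punctured code. -/
theorem minDist_le_of_punctured (k d : ℕ) (C : Submodule F (Fin n → F))
    (hk : Module.finrank F C = k) (hkpos : 0 < k)
    (hd : IsMinDist F n C d) (S : Finset (Fin n))
    (hS : Module.finrank F ↥(puncture F n C S) = k - 1) :
    d ≤ n - {i : Fin n | ∃ c ∈ puncture F n C S, c i ≠ 0}.ncard := by
  obtain ⟨c, hcC, hc0, hcS⟩ : ∃ c ∈ C, c ≠ 0 ∧ puncProj F n S c = 0 := by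
    by_contra hcon
    have hinj : Function.Injective ((puncProj F n S).domRestrict C) := by
      rw [← LinearMap.ker_eq_bot, LinearMap.ker_eq_bot']
      rintro ⟨x, hx⟩ h
      by_contra hne
      exact hcon ⟨x, hx, fun h0 => hne (Subtype.ext h0), h⟩
    have h1 := LinearMap.finrank_range_of_inj hinj
    rw [LinearMap.range_domRestrict] at h1
    unfold puncture at hS
    omega
  have hle := hd.2 c hcC hc0
  have hsub : {i : Fin n | ∃ c ∈ puncture F n C S, c i ≠ 0} ⊆ (S : Set (Fin n)) := by
    rintro i ⟨x, hx, hxi⟩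
    obtain ⟨y, -, rfl⟩ := hx
    by_contra hi
    have hi' : i ∉ S := hi
    exact hxi (by simp [puncProj, hi'])
  have h2 := Set.ncard_le_ncard hsub (Set.toFinite _)
  rw [Set.ncard_coe_finset] at h2
  have h3 : hammingNorm c ≤ Sᶜ.card := by
    unfold hammingNorm
    apply Finset.card_le_card
    intro i hi
    rw [Finset.mem_compl]
    intro hiS
    have h4 : c i = 0 := by simpa [puncProj, hiS] using congrFun hcS i
    exact (Finset.mem_filter.mp hi).2 h4
  rw [Finset.card_compl, Fintype.card_fin] at h3
  omega
end
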